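/- Let M = (E, I) be a matroid with |E| = n. Suppose S ⊆ E satisfies: (1) α(S) ≤ |S|/(100·log n), where α(S) is the smallest ℓ such that a uniformly random ℓ-subset of S is independent with probability at most 1/2; and (2) for every x ∈ S, when elements of S are added in a uniformly random order until the first circuit appears, the probability that x belongs to this first circuit is at least 1/n^{10}. Then |S| − rank(S) = Ω(|S|/log n). -/

import Mathlib

open Finset

/-- A circuit of a matroid: a minimal dependent subset of the ground set. -/
def MCircuit {α : Type*} (M : Matroid α) (C : Set α) : Prop :=
  C ⊆ M.E ∧ ¬ M.Indep C ∧ ∀ x ∈ C, M.Indep (C \ {x})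

/-- The rank of a set in a matroid: the maximum cardinality of an independent subset. -/
noncomputable def mrank {α : Type*} (M : Matroid α) (S : Set α) : ℕ :=
  sSup {n | ∃ I : Set α, M.Indep I ∧ I ⊆ S ∧ I.ncard = n}

/-- The set of elements appearing among the first `t` positions of the enumeration `π`. -/
def prefixSet {α : Type*} {s : ℕ} (π : Fin s → α) (t : ℕ) : Set α :=
  {a | ∃ i : Fin s, (i : ℕ) < t ∧ π i = a}

/-- `x` belongs to the first circuit that appears when elements are added in the order
given by the enumeration `π`: there is a `t` such that the `(t-1)`-prefix is independent,
the `t`-prefix is dependent, and some circuit contained in the `t`-prefix contains `x`. -/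
def MemFirstCircuit {α : Type*} {s : ℕ} (M : Matroid α) (π : Fin s → α) (x : α) : Prop :=
  ∃ t : ℕ, t ≤ s ∧ M.Indep (prefixSet π (t - 1)) ∧ ¬ M.Indep (prefixSet π t) ∧
    ∃ C : Set α, MCircuit M C ∧ C ⊆ prefixSet π t ∧ x ∈ C

open Classical in
/-- The number of permutations of `β` sending `X` to a set with property `P`. -/
noncomputable def permCount {β : Type*} [Fintype β] [DecidableEq β] (P : Finset β → Prop) (X : Finset β) : ℕ :=
  (univ.filter fun σ : Equiv.Perm β => P (X.map σ.toEmbedding)).card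

section PermCount

variable {β : Type*} [Fintype β] [DecidableEq β]

lemma permCount_le (P : Finset β → Prop) (X : Finset β) :
    permCount P X ≤ Fintype.card (Equiv.Perm β) := by
  classical
  exact card_le_univ _

lemma permCount_map (P : Finset β → Prop) (X : Finset β) (τ : Equiv.Perm β) :
    permCount P (X.map τ.toEmbedding) = permCount P X := by
  classical
  refine card_equiv (Equiv.mulRight τ) fun σ => ?_
  simp only [mem_filter, mem_univ, true_and, Equiv.coe_mulRight, Finset.map_map]
  rfl

lemma exists_perm_map_eq {X Y : Finset β} (h : X.card = Y.card) :
    ∃ τ : Equiv.Perm β, X.map τ.toEmbedding = Y := by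
  classical
  have e : {x // x ∈ X} ≃ {x // x ∈ Y} := Finset.equivOfCardEq h
  refine ⟨e.extendSubtype, ?_⟩
  refine eq_of_subset_of_card_le (fun y hy => ?_) (by simp [h])
  obtain ⟨x, hx, rfl⟩ := mem_map.1 hy
  exact e.extendSubtype_mem x hx

lemma permCount_congr_card (P : Finset β → Prop) {X Y : Finset β} (h : X.card = Y.card) :
    permCount P X = permCount P Y := by
  obtain ⟨τ, rfl⟩ := exists_perm_map_eq h
  exact (permCount_map P X τ).symm

lemma permCount_anti {P : Finset β → Prop} (hP : ∀ ⦃X Y⦄, X ⊆ Y → P Y → P X)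
    {X Y : Finset β} (h : X.card ≤ Y.card) : permCount P Y ≤ permCount P X := by
  classical
  obtain ⟨Z, hZ, hc⟩ := exists_subset_card_eq h
  rw [← permCount_congr_card P hc]
  refine card_le_card fun σ hσ => ?_
  simp only [mem_filter, mem_univ, true_and] at hσ ⊢
  exact hP (map_subset_map.2 hZ) hσ

/-- The density of a down-set on slices is submultiplicative: compare the union of two
independent uniform images with a uniform image of a larger set. -/
lemma permCount_mul_le {P : Finset β → Prop} (hP : ∀ ⦃X Y⦄, X ⊆ Y → P Y → P X)
    {X Y Z : Finset β} (h : X.card + Y.card ≤ Z.card) :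
    Fintype.card (Equiv.Perm β) * permCount P Z ≤ permCount P X * permCount P Y := by
  classical
  calc Fintype.card (Equiv.Perm β) * permCount P Z
      = ∑ _ρ : Equiv.Perm β, permCount P Z := by simp
    _ ≤ ∑ ρ : Equiv.Perm β, permCount P (X ∪ Y.map ρ.toEmbedding) :=
        sum_le_sum fun ρ _ => permCount_anti hP <|
          (card_union_le _ _).trans (by rwa [card_map])
    _ = ∑ ρ : Equiv.Perm β, ∑ σ : Equiv.Perm β,
          if P ((X ∪ Y.map ρ.toEmbedding).map σ.toEmbedding) then 1 else 0 := by
        simp only [permCount, card_filter]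
    _ = ∑ σ : Equiv.Perm β, ∑ ρ : Equiv.Perm β,
          if P ((X ∪ Y.map ρ.toEmbedding).map σ.toEmbedding) then 1 else 0 := sum_comm
    _ = ∑ σ : Equiv.Perm β, ∑ τ : Equiv.Perm β,
          if P (X.map σ.toEmbedding ∪ Y.map τ.toEmbedding) then 1 else 0 := by
        refine sum_congr rfl fun σ _ => ?_
        refine Fintype.sum_equiv (Equiv.mulLeft σ) _ _ fun ρ => ?_
        rw [map_union, Finset.map_map]
        rfl
    _ ≤ ∑ σ : Equiv.Perm β, ∑ τ : Equiv.Perm β,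
          (if P (X.map σ.toEmbedding) then 1 else 0) *
            (if P (Y.map τ.toEmbedding) then 1 else 0) := by
        refine sum_le_sum fun σ _ => sum_le_sum fun τ _ => ?_
        split_ifs with h1 h2 h3 h3 <;> simp
        · exact h3 (hP subset_union_right h1)
        · exact h2 (hP subset_union_left h1)
        · exact h2 (hP subset_union_left h1)
    _ = permCount P X * permCount P Y := by
        rw [← sum_mul_sum]
        simp only [permCount, card_filter]

lemma permCount_div_le_pow {P : Finset β → Prop} (hP : ∀ ⦃X Y⦄, X ⊆ Y → P Y → P X)
    (X : Finset β) (k : ℕ) {Z : Finset β} (h : k * X.card ≤ Z.card) :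
    (permCount P Z : ℝ) / Fintype.card (Equiv.Perm β) ≤
      ((permCount P X : ℝ) / Fintype.card (Equiv.Perm β)) ^ k := by
  have hpos : (0 : ℝ) < Fintype.card (Equiv.Perm β) := by exact_mod_cast Fintype.card_pos
  induction k generalizing Z with
  | zero =>
    rw [pow_zero, div_le_one hpos]
    exact_mod_cast permCount_le P Z
  | succ k ih =>
    obtain ⟨Y, -, hY⟩ := exists_subset_card_eq (s := Z) (n := k * X.card)
      (le_trans (Nat.mul_le_mul_right _ k.le_succ) h)
    have hm : (Fintype.card (Equiv.Perm β) : ℝ) * permCount P Z ≤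
        permCount P Y * permCount P X := by
      exact_mod_cast permCount_mul_le hP (by rw [hY]; nlinarith)
    calc (permCount P Z : ℝ) / Fintype.card (Equiv.Perm β)
        ≤ (permCount P Y : ℝ) / Fintype.card (Equiv.Perm β) *
            ((permCount P X : ℝ) / Fintype.card (Equiv.Perm β)) := by
          rw [div_mul_div_comm, div_le_div_iff₀ hpos (by positivity)]
          nlinarith
      _ ≤ _ := by
          rw [pow_succ]
          exact mul_le_mul_of_nonneg_right (ih hY.ge) (by positivity)

open Classical in
lemma card_powersetCard_mul_permCount (P : Finset β → Prop) (X : Finset β) :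
    (powersetCard X.card (univ : Finset β)).card * permCount P X =
      Fintype.card (Equiv.Perm β) * ((powersetCard X.card univ).filter P).card := by
  calc (powersetCard X.card (univ : Finset β)).card * permCount P X
      = ∑ T ∈ powersetCard X.card (univ : Finset β), permCount P T := by
        rw [sum_congr rfl fun T hT => permCount_congr_card P (mem_powersetCard.1 hT).2]
        simp
    _ = ∑ T ∈ powersetCard X.card (univ : Finset β), ∑ σ : Equiv.Perm β,
          if P (T.map σ.toEmbedding) then 1 else 0 := by
        simp only [permCount, card_filter]
    _ = ∑ σ : Equiv.Perm β, ∑ T ∈ powersetCard X.card (univ : Finset β),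
          if P (T.map σ.toEmbedding) then 1 else 0 := sum_comm
    _ = ∑ σ : Equiv.Perm β, ∑ T ∈ powersetCard X.card (univ : Finset β),
          if P T then 1 else 0 := by
        refine sum_congr rfl fun σ _ => ?_
        have hu : powersetCard X.card (univ : Finset β) =
            (powersetCard X.card univ).map (mapEmbedding σ.toEmbedding).toEmbedding := by
          rw [← powersetCard_map, map_univ_equiv]
        conv_rhs => rw [hu, sum_map]
        rfl
    _ = _ := by rw [sum_const, card_univ, smul_eq_mul, card_filter]

open Classical in
/-- Conditioning a uniform image of `D` on containing `x` does not decrease the probability of a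
down-closed property that ignores `x`. -/
lemma permCount_le_card_mul {P : Finset β → Prop} (hP : ∀ ⦃X Y⦄, X ⊆ Y → P Y → P X) {x : β}
    (hx : ∀ X, P X → P (insert x X)) {D : Finset β} {j : β} (hj : j ∈ D) :
    permCount P D ≤ Fintype.card β * (univ.filter fun σ : Equiv.Perm β =>
      σ j = x ∧ P (D.map σ.toEmbedding)).card := by
  calc permCount P D
      = ∑ i : β, ((univ.filter fun σ : Equiv.Perm β =>
          P (D.map σ.toEmbedding)).filter fun σ => σ.symm x = i).card :=
        card_eq_sum_card_fiberwise fun _ _ => mem_univ _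
    _ ≤ ∑ _i : β, (univ.filter fun σ : Equiv.Perm β =>
          σ j = x ∧ P (D.map σ.toEmbedding)).card := by
        refine sum_le_sum fun i _ => ?_
        refine card_le_card_of_injOn (fun σ => σ * Equiv.swap i j) (fun σ hσ => ?_)
          fun σ _ τ _ h => mul_right_cancel h
        simp only [coe_filter, mem_filter, mem_univ, true_and, Set.mem_ofPred_eq] at hσ ⊢
        obtain ⟨hσ, hi⟩ := hσ
        have hi' : σ i = x := by rw [← hi]; simp
        refine ⟨by simp [hi'], hP ?_ (hx _ hσ)⟩
        intro y hy
        obtain ⟨l, hl, rfl⟩ := mem_map.1 hy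
        simp only [Equiv.coe_toEmbedding, Equiv.Perm.coe_mul, Function.comp_apply, mem_insert,
          mem_map]
        rcases eq_or_ne l j with rfl | hlj
        · left; simp [hi']
        · right
          rcases eq_or_ne l i with rfl | hli
          · exact ⟨j, hj, by simp⟩
          · exact ⟨l, hl, by rw [Equiv.swap_apply_of_ne_of_ne hli hlj]⟩
    _ = _ := by simp

end PermCount

section Matroid

variable {α : Type*} {M : Matroid α}

lemma MCircuit.mem_closure_diff {C : Set α} (hC : MCircuit M C) {x : α} (hx : x ∈ C) :
    x ∈ M.closure (C \ {x}) := by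
  rw [(hC.2.2 x hx).mem_closure_iff]
  left
  rw [Set.insert_sdiff_singleton, Set.insert_eq_of_mem hx]
  exact ⟨hC.2.1, hC.1⟩

lemma mrank_add_card_le [Finite α] {S D : Set α} (hDS : D ⊆ S)
    (hD : D ⊆ M.closure (S \ D)) (hS : S ⊆ M.E) : mrank M S + D.ncard ≤ S.ncard := by
  have hle : mrank M S ≤ (S \ D).ncard := by
    refine csSup_le' ?_
    rintro _ ⟨I, hI, hIS, rfl⟩
    have hcl : I ⊆ M.closure (S \ D) := by
      intro y hy
      by_cases hyD : y ∈ D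
      · exact hD hyD
      · exact M.subset_closure (S \ D) (Set.sdiff_subset.trans hS) ⟨hIS hy, hyD⟩
    have h := (hI.encard_le_eRk_of_subset hcl).trans
      ((M.eRk_closure_eq _).le.trans (M.eRk_le_encard _))
    rw [← (Set.toFinite I).cast_ncard_eq, ← (Set.toFinite (S \ D)).cast_ncard_eq] at h
    exact_mod_cast h
  have := Set.ncard_sdiff_add_ncard_of_subset hDS (Set.toFinite S)
  omega

lemma MemFirstCircuit.indep_or_mem_closure {S : Set α} {s : ℕ} {π : Fin s → α} {x : α}
    (h : MemFirstCircuit (M.restrict S) π x) (hπ : ∀ i, π i ∈ S) (hS : S ⊆ M.E) (L : ℕ) :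
    M.Indep (prefixSet π L) ∨ x ∈ M.closure (prefixSet π L \ {x}) := by
  have hmono : ∀ {t u : ℕ}, t ≤ u → prefixSet π t ⊆ prefixSet π u := by
    rintro t u htu _ ⟨i, hi, rfl⟩
    exact ⟨i, hi.trans_le htu, rfl⟩
  have hsub : ∀ t, prefixSet π t ⊆ S := by
    rintro t _ ⟨i, -, rfl⟩
    exact hπ i
  obtain ⟨t, -, hind, -, C, hC, hCt, hxC⟩ := h
  have hcl : MCircuit M C := by
    obtain ⟨h1, h2, h3⟩ := hC
    refine ⟨h1.trans hS, fun hI => h2 (Matroid.restrict_indep_iff.2 ⟨hI, h1⟩), fun y hy => ?_⟩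
    exact (Matroid.restrict_indep_iff.1 (h3 y hy)).1
  by_cases htL : t ≤ L
  · right
    refine M.closure_subset_closure ?_ (hcl.mem_closure_diff hxC)
    exact Set.sdiff_subset_sdiff_left (hCt.trans (hmono htL))
  · left
    exact (Matroid.restrict_indep_iff.1 hind).1.subset (hmono (by omega))

end Matroid

/-- In terms of an enumeration `e` of `S`: a circuit through `x` survives the removal of `D`. -/
def SpannedAfterRemoval {α β : Type*} (M : Matroid α) (e : β → α) (x : β) (D : Finset β) : Prop :=
  e x ∈ M.closure (e '' {i | i ∉ D ∧ i ≠ x})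

section Spanned

variable {α β : Type*} {M : Matroid α} {e : β → α}

lemma SpannedAfterRemoval.anti (x : β) ⦃X Y : Finset β⦄ (h : X ⊆ Y)
    (hY : SpannedAfterRemoval M e x Y) : SpannedAfterRemoval M e x X :=
  M.closure_subset_closure
    (Set.image_mono fun _ => And.imp_left fun hi hX => hi (h hX)) hY

lemma SpannedAfterRemoval.insert_self [DecidableEq β] {x : β} (X : Finset β)
    (h : SpannedAfterRemoval M e x X) : SpannedAfterRemoval M e x (insert x X) := by
  refine M.closure_subset_closure (Set.image_mono ?_) h
  rintro i ⟨hi, hix⟩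
  exact ⟨by simp [hi, hix], hix⟩

open Classical in
/-- Averaging over the images of `D`: if every element survives with probability at least `1/2`,
then the nullity of `S` is at least `|D| / 2`. -/
lemma card_div_two_le_nullity [Fintype β] [DecidableEq β] [Finite α] (he : Function.Injective e)
    (hE : Set.range e ⊆ M.E) (D : Finset β)
    (hD : ∀ x, (Fintype.card (Equiv.Perm β) : ℝ) / 2 ≤ permCount (SpannedAfterRemoval M e x) D) :
    (D.card : ℝ) / 2 ≤ Fintype.card β - mrank M (Set.range e) := by
  set N : ℝ := (Fintype.card (Equiv.Perm β) : ℝ) with hN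
  have hNpos : 0 < N := by rw [hN]; exact_mod_cast Fintype.card_pos
  have hupper : ∀ σ : Equiv.Perm β,
      ((D.filter fun j => SpannedAfterRemoval M e (σ j) (D.map σ.toEmbedding)).card : ℝ) ≤
        Fintype.card β - mrank M (Set.range e) := by
    intro σ
    set F := D.filter fun j => SpannedAfterRemoval M e (σ j) (D.map σ.toEmbedding) with hF
    set D' : Set α := (fun j => e (σ j)) '' F with hD'
    have hcard : D'.ncard = F.card := by
      rw [← Set.ncard_coe_finset]
      exact Set.ncard_image_of_injective _ (he.comp σ.injective)
    have hcl : D' ⊆ M.closure (Set.range e \ D') := by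
      rintro _ ⟨j, hj, rfl⟩
      have hj2 := (mem_filter.1 (mem_coe.1 hj)).2
      refine M.closure_subset_closure ?_ hj2
      rintro _ ⟨i, hi, rfl⟩
      refine ⟨⟨i, rfl⟩, ?_⟩
      rintro ⟨l, hl, hli⟩
      refine hi.1 (mem_map.2 ⟨l, (mem_filter.1 (mem_coe.1 hl)).1, he hli⟩)
    have h := mrank_add_card_le (M := M) (S := Set.range e) (D := D')
      (by rintro _ ⟨j, -, rfl⟩; exact ⟨_, rfl⟩) hcl hE
    rw [hcard, ← Set.image_univ, Set.ncard_image_of_injective _ he, Set.ncard_univ,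
      Nat.card_eq_fintype_card] at h
    have h' : (mrank M (e '' Set.univ) : ℝ) + F.card ≤ Fintype.card β := by exact_mod_cast h
    rw [Set.image_univ] at h'
    linarith
  have hlower : ∀ j ∈ D, N / 2 ≤
      ∑ σ : Equiv.Perm β,
        if SpannedAfterRemoval M e (σ j) (D.map σ.toEmbedding) then (1 : ℝ) else 0 := by
    intro j hj
    have : Nonempty β := ⟨j⟩
    have hb : (0 : ℝ) < Fintype.card β := by exact_mod_cast Fintype.card_pos
    have hfib : ∑ σ : Equiv.Perm β,
        (if SpannedAfterRemoval M e (σ j) (D.map σ.toEmbedding) then (1 : ℝ) else 0) =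
        ∑ x : β, ((univ.filter fun σ : Equiv.Perm β =>
          σ j = x ∧ SpannedAfterRemoval M e x (D.map σ.toEmbedding)).card : ℝ) := by
      simp only [card_filter, Nat.cast_sum, Nat.cast_ite, Nat.cast_one, Nat.cast_zero]
      rw [sum_comm]
      refine sum_congr rfl fun σ _ => ?_
      rw [Finset.sum_eq_single (σ j)]
      · simp
      · intro x _ hx
        simp [hx.symm]
      · simp
    rw [hfib]
    have hx : ∀ x : β, N / 2 / Fintype.card β ≤
        ((univ.filter fun σ : Equiv.Perm β =>
          σ j = x ∧ SpannedAfterRemoval M e x (D.map σ.toEmbedding)).card : ℝ) := by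
      intro x
      rw [div_le_iff₀' hb]
      refine (hD x).trans ?_
      exact_mod_cast permCount_le_card_mul (SpannedAfterRemoval.anti x)
        (fun X h => h.insert_self X) hj
    calc N / 2 = ∑ _x : β, N / 2 / Fintype.card β := by
          rw [sum_const, card_univ, nsmul_eq_mul]; field_simp
      _ ≤ _ := sum_le_sum fun x _ => hx x
  have hsum : (D.card : ℝ) * (N / 2) ≤ N * (Fintype.card β - mrank M (Set.range e)) := by
    calc (D.card : ℝ) * (N / 2) = ∑ _j ∈ D, N / 2 := by simp
      _ ≤ ∑ j ∈ D, ∑ σ : Equiv.Perm β,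
            if SpannedAfterRemoval M e (σ j) (D.map σ.toEmbedding) then (1 : ℝ) else 0 :=
          sum_le_sum hlower
      _ = ∑ σ : Equiv.Perm β,
            ((D.filter fun j => SpannedAfterRemoval M e (σ j) (D.map σ.toEmbedding)).card : ℝ) := by
          rw [sum_comm]
          simp only [sum_boole]
      _ ≤ ∑ _σ : Equiv.Perm β, ((Fintype.card β : ℝ) - mrank M (Set.range e)) :=
          sum_le_sum fun σ _ => hupper σ
      _ = _ := by rw [sum_const, card_univ, nsmul_eq_mul]
  nlinarith

end Spanned

open Classical in
/-- A filter of a coerced `Finset (Set α)`, as opposed to one of a `Finset (Finset α)`. -/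
lemma card_filter_coe {α : Type*} (F : Finset (Finset α)) (P : Set α → Prop) :
    (F.filter (fun T => P ↑T)).card = (F.filter fun T : Finset α => P (T : Set α)).card := by
  rw [← card_image_of_injective (F.filter fun T : Finset α => P (T : Set α)) coe_injective]
  congr 1
  ext T
  simp only [mem_filter, mem_image, bind_def, pure_def, mem_sup, mem_singleton]
  aesop

lemma two_mul_permCount_indep_le {α : Type*} {M : Matroid α} {S : Finset α}
    (e : Fin S.card ↪ α) (he : univ.map e = S) {X : Finset (Fin S.card)}
    [DecidablePred fun T : Finset α => M.Indep (T : Set α)]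
    (h : 2 * ((S.powersetCard X.card).filter (fun T : Finset α => M.Indep (T : Set α))).card ≤
      (S.powersetCard X.card).card) :
    2 * permCount (fun T => M.Indep (e '' (T : Set (Fin S.card)))) X ≤
      Fintype.card (Equiv.Perm (Fin S.card)) := by
  classical
  have hP := card_powersetCard_mul_permCount
    (fun T : Finset (Fin S.card) => M.Indep (e '' (T : Set (Fin S.card)))) X
  have hcard : ((powersetCard X.card univ).filter
      (fun T : Finset (Fin S.card) => M.Indep (e '' (T : Set (Fin S.card))))).card =
      ((S.powersetCard X.card).filter (fun T : Finset α => M.Indep (T : Set α))).card := by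
    have hS : S.powersetCard X.card =
        (powersetCard X.card univ).map (mapEmbedding e).toEmbedding := by
      rw [← powersetCard_map, he]
    rw [hS, filter_map, card_map]
    congr 1
    refine filter_congr fun T _ => ?_
    simp [mapEmbedding]
  have hpc : (S.powersetCard X.card).card = (powersetCard X.card (univ : Finset (Fin S.card))).card
      := by simp
  rw [hcard] at hP
  have hpos : 0 < (powersetCard X.card (univ : Finset (Fin S.card))).card := by
    rw [card_powersetCard]
    exact Nat.choose_pos (card_le_univ _)
  rw [hpc] at h
  refine Nat.le_of_mul_le_mul_left ?_ hpos
  calc _ = 2 * ((powersetCard X.card (univ : Finset (Fin S.card))).card *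
        permCount (fun T => M.Indep (e '' (T : Set (Fin S.card)))) X) := by ring
    _ ≤ _ := by rw [hP]; nlinarith [Nat.mul_le_mul_left (Fintype.card (Equiv.Perm (Fin S.card))) h]

lemma prefixSet_comp {α : Type*} {s : ℕ} (e : Fin s → α) (σ : Equiv.Perm (Fin s)) (L : ℕ) :
    prefixSet (e ∘ σ) L =
      e '' ((univ.filter fun i : Fin s => (i : ℕ) < L).map σ.toEmbedding : Finset (Fin s)) := by
  ext y
  rw [coe_map, ← Set.image_comp]
  simp [prefixSet]

open Classical in
/-- If the prefix of length `L` is dependent, the first circuit lies inside it, so it survives the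
removal of the remaining elements. -/
lemma card_memFirstCircuit_le {α : Type*} [Fintype α] {M : Matroid α} {S : Finset α}
    (hS : (S : Set α) ⊆ M.E) (e : Fin S.card ↪ α) (he : univ.map e = S) (L : ℕ)
    (x : Fin S.card) :
    (univ.filter (fun π : Fin S.card → α => Function.Injective π ∧ (∀ i, π i ∈ S) ∧
        MemFirstCircuit (M.restrict ↑S) π (e x))).card ≤
      permCount (fun T => M.Indep (e '' (T : Set (Fin S.card))))
          (univ.filter fun i : Fin S.card => (i : ℕ) < L) +
        permCount (SpannedAfterRemoval M e x)
          (univ.filter fun i : Fin S.card => ¬ (i : ℕ) < L) := by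
  have hmem : ∀ y, y ∈ S ↔ ∃ i, e i = y := by
    intro y
    conv_lhs => rw [← he]
    simp
  refine le_trans ?_ (card_union_le _ _)
  refine le_trans (card_le_card ?_) (card_image_le (f := fun σ : Equiv.Perm (Fin S.card) => e ∘ σ))
  intro π hπ
  simp only [mem_filter, mem_univ, true_and] at hπ
  obtain ⟨hinj, hπS, hfirst⟩ := hπ
  choose f hf using fun i => (hmem (π i)).1 (hπS i)
  have hfinj : Function.Injective f := fun i j hij => hinj (by rw [← hf, ← hf, hij])
  let σ : Equiv.Perm (Fin S.card) := Equiv.ofBijective f (Finite.injective_iff_bijective.1 hfinj)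
  have hσ : e ∘ σ = π := funext hf
  refine mem_image.2 ⟨σ, ?_, hσ⟩
  simp only [mem_union, mem_filter, mem_univ, true_and]
  rw [← prefixSet_comp, hσ]
  refine (hfirst.indep_or_mem_closure hπS hS L).imp id fun h => ?_
  refine M.closure_subset_closure ?_ h
  rw [← hσ, prefixSet_comp]
  rintro _ ⟨⟨i, hi, rfl⟩, hne⟩
  refine ⟨i, ⟨?_, fun hix => hne (by simp [hix])⟩, rfl⟩
  obtain ⟨l, hl, rfl⟩ := mem_map.1 (mem_coe.1 hi)
  simpa using hl

lemma card_perm_le_card_injective {α : Type*} [Fintype α] {S : Finset α}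
    (e : Fin S.card ↪ α) (he : univ.map e = S)
    [DecidablePred fun π : Fin S.card → α => Function.Injective π ∧ ∀ i, π i ∈ S]
    [Fintype (Fin S.card → α)] :
    Fintype.card (Equiv.Perm (Fin S.card)) ≤
      (univ.filter (fun π : Fin S.card → α => Function.Injective π ∧ (∀ i, π i ∈ S))).card := by
  have hmem : ∀ i, e i ∈ S := by
    intro i
    have h : e i ∈ univ.map e := mem_map_of_mem e (mem_univ i)
    rwa [he] at h
  rw [← card_univ]
  refine card_le_card_of_injOn (fun σ : Equiv.Perm (Fin S.card) => e ∘ σ) (fun σ _ => ?_) fun σ _ τ _ h => ?_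
  · simpa using ⟨e.injective, fun i => hmem (σ i)⟩
  · ext i
    exact congrArg Fin.val (e.injective (congrFun h i))

-- If `α(S) ≤ |S|/(100·log n)` and every `x ∈ S` lies in the first circuit of a uniformly
-- random ordering of `S` with probability at least `1/n^10`, then
-- `|S| - rank(S) = Ω(|S|/log n)`.
open Classical in
theorem stmt18 :
    ∃ c : ℝ, 0 < c ∧
      ∀ (α : Type) (_ : Fintype α) (_ : DecidableEq α) (M : Matroid α)
        (S : Finset α) (n : ℕ),
        n = M.E.ncard → (↑S : Set α) ⊆ M.E →
        ∀ a : ℕ,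
          -- `a = α(S)`: smallest `ℓ` with independence probability at most `1/2`
          (2 * ((S.powersetCard a).filter (fun T => M.Indep ↑T)).card
              ≤ (S.powersetCard a).card) →
          (∀ ℓ < a, 2 * ((S.powersetCard ℓ).filter (fun T => M.Indep ↑T)).card
              > (S.powersetCard ℓ).card) →
          -- hypothesis (1): `α(S) ≤ |S|/(100·log n)`
          (a : ℝ) ≤ (S.card : ℝ) / (100 * Real.logb 2 (n : ℝ)) →
          -- hypothesis (2): each `x ∈ S` is in the first circuit of a random ordering of
          -- `S` with probability at least `1/n^10`
          (∀ x ∈ S,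
            ((Finset.univ.filter (fun π : Fin S.card → α =>
                Function.Injective π ∧ (∀ i, π i ∈ S))).card : ℝ)
              ≤ (n : ℝ) ^ 10 *
                ((Finset.univ.filter (fun π : Fin S.card → α =>
                  Function.Injective π ∧ (∀ i, π i ∈ S) ∧
                    MemFirstCircuit (M.restrict ↑S) π x)).card : ℝ)) →
          c * (S.card : ℝ) / Real.logb 2 (n : ℝ) ≤
            (S.card : ℝ) - (mrank M ↑S : ℝ) := by
  refine ⟨1 / 40, by norm_num, ?_⟩
  intro α _ _ M S n hn hS a ha _ hα hx
  rw [card_filter_coe] at ha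
  have ha1 : 1 ≤ a := by
    rcases Nat.eq_zero_or_pos a with rfl | h
    · simp [filter_singleton] at ha
    · exact h
  have ha1' : (1 : ℝ) ≤ a := by exact_mod_cast ha1
  have hn2 : 2 ≤ n := by
    by_contra! h
    have : Real.logb 2 (n : ℝ) = 0 := by interval_cases n <;> simp
    rw [this] at hα
    simp at hα
    omega
  have hn2' : (2 : ℝ) ≤ n := by exact_mod_cast hn2
  set l := Real.logb 2 (n : ℝ) with hl
  have hl1 : 1 ≤ l := by
    rw [hl, Real.le_logb_iff_rpow_le (by norm_num) (by linarith)]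
    simpa using hn2'
  have hal : a * (100 * l) ≤ S.card := (le_div_iff₀ (by positivity)).1 hα
  set k := ⌈11 * l⌉₊ with hk
  have hk1 : 11 * l ≤ k := Nat.le_ceil _
  have hk2 : (k : ℝ) ≤ 12 * l := by
    have := Nat.ceil_lt_add_one (a := 11 * l) (by positivity)
    linarith
  have hkpos' : (0 : ℝ) < k := by linarith
  have hkpos : 0 < k := by exact_mod_cast hkpos'
  have hpow : (n : ℝ) ^ 11 ≤ 2 ^ k := by
    have hnl : (2 : ℝ) ^ l = n := Real.rpow_logb (by norm_num) (by norm_num) (by linarith)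
    calc (n : ℝ) ^ 11 = (2 : ℝ) ^ (11 * l) := by
          rw [mul_comm, Real.rpow_mul (by norm_num), hnl]
          norm_cast
      _ ≤ (2 : ℝ) ^ (k : ℝ) := Real.rpow_le_rpow_of_exponent_le (by norm_num) hk1
      _ = 2 ^ k := Real.rpow_natCast _ _
  have hka : a * k ≤ S.card := by
    have : (a : ℝ) * k ≤ S.card := by nlinarith
    exact_mod_cast this
  have hale : a ≤ S.card / k := (Nat.le_div_iff_mul_le hkpos).2 hka
  set d := S.card / k - a with hd
  have hda : k * a + k * d ≤ S.card := by
    have : a + d = S.card / k := by omega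
    rw [← mul_add, this]
    exact Nat.mul_div_le _ _
  have hdlow : (S.card : ℝ) / (20 * l) ≤ d := by
    have h1 : (S.card : ℝ) < k * (d + a + 1) := by
      have h := Nat.lt_mul_div_succ S.card hkpos
      have h2 : S.card / k = d + a := by omega
      rw [h2] at h
      exact_mod_cast h
    rw [div_le_iff₀ (by positivity)]
    nlinarith
  let e : Fin S.card ↪ α := S.equivFin.symm.toEmbedding.trans (Function.Embedding.subtype _)
  have he : univ.map e = S := by
    ext y
    simp only [e, mem_map, mem_univ, true_and, Function.Embedding.trans_apply,
      Equiv.coe_toEmbedding, Function.Embedding.subtype_apply]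
    exact ⟨fun ⟨i, hi⟩ => hi ▸ (S.equivFin.symm i).2,
      fun hy => ⟨S.equivFin ⟨y, hy⟩, by simp⟩⟩
  have hrange : Set.range e = (S : Set α) := by
    conv_rhs => rw [← he]
    simp
  have hacard : a ≤ (univ : Finset (Fin S.card)).card := by
    rw [card_univ, Fintype.card_fin]
    exact hale.trans (Nat.div_le_self _ _)
  have hdcard : d ≤ (univ : Finset (Fin S.card)).card := by
    rw [card_univ, Fintype.card_fin]
    exact (Nat.sub_le _ _).trans (Nat.div_le_self _ _)
  obtain ⟨A, -, hA⟩ := exists_subset_card_eq hacard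
  obtain ⟨D, -, hD⟩ := exists_subset_card_eq hdcard
  set N : ℝ := (Fintype.card (Equiv.Perm (Fin S.card)) : ℝ) with hN
  have hNpos : 0 < N := by rw [hN]; exact_mod_cast Fintype.card_pos
  set I : Finset (Fin S.card) → Prop := fun T => M.Indep (e '' (T : Set (Fin S.card))) with hI
  have hIanti : ∀ ⦃X Y⦄, X ⊆ Y → I Y → I X := fun X Y hXY h =>
    h.subset (Set.image_mono (coe_subset.2 hXY))
  have hIA : (permCount I A : ℝ) / N ≤ 1 / 2 := by
    rw [← hA] at ha
    have h : ((2 * permCount I A : ℕ) : ℝ) ≤ N :=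
      Nat.cast_le.2 (two_mul_permCount_indep_le e he ha)
    push_cast at h
    rw [div_le_iff₀ hNpos]
    linarith
  set B := univ.filter fun i : Fin S.card => (i : ℕ) < k * a with hB
  set B' := univ.filter fun i : Fin S.card => ¬ (i : ℕ) < k * a with hB'
  have hBcard : B.card = k * a := by
    rw [hB, Fin.card_filter_val_lt, min_eq_right (by linarith)]
  have hBB : B.card + B'.card = S.card := by
    rw [hB, hB', card_filter_add_card_filter_not, card_univ, Fintype.card_fin]
  have hIB : (permCount I B : ℝ) / N ≤ (1 / 2) ^ k :=
    (permCount_div_le_pow hIanti A k (by rw [hA, hBcard])).trans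
      (pow_le_pow_left₀ (by positivity) hIA k)
  have hhalf : ∀ x, N / 2 ≤ permCount (SpannedAfterRemoval M e x) D := by
    intro x
    have hKB : (permCount (SpannedAfterRemoval M e x) B' : ℝ) / N ≤
        ((permCount (SpannedAfterRemoval M e x) D : ℝ) / N) ^ k :=
      permCount_div_le_pow (SpannedAfterRemoval.anti x) D k (by rw [hD]; omega)
    have hexS : e x ∈ S := by
      rw [← mem_coe, ← hrange]
      exact ⟨x, rfl⟩
    have hfirst : N ≤ (n : ℝ) ^ 10 *
        (permCount I B + permCount (SpannedAfterRemoval M e x) B') := by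
      refine le_trans ?_ ((hx (e x) hexS).trans ?_)
      · rw [hN]
        exact_mod_cast card_perm_le_card_injective e he
      · refine mul_le_mul_of_nonneg_left ?_ (by positivity)
        rw [← Nat.cast_add]
        refine Nat.cast_le.2 ?_
        convert card_memFirstCircuit_le hS e he (k * a) x
    have hdiv : 1 ≤ (n : ℝ) ^ 10 * ((permCount I B : ℝ) / N +
        (permCount (SpannedAfterRemoval M e x) B' : ℝ) / N) := by
      rw [← add_div, ← mul_div_assoc, le_div_iff₀ hNpos, one_mul]
      exact hfirst
    have hsum : 1 ≤ (n : ℝ) ^ 10 * ((1 / 2) ^ k +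
        ((permCount (SpannedAfterRemoval M e x) D : ℝ) / N) ^ k) :=
      hdiv.trans (by gcongr)
    by_contra! hlt
    have hq : (permCount (SpannedAfterRemoval M e x) D : ℝ) / N < 1 / 2 := by
      rw [div_lt_iff₀ hNpos]
      linarith
    have hqk := pow_lt_pow_left₀ hq (by positivity) hkpos.ne'
    have hn10 : (0 : ℝ) < (n : ℝ) ^ 10 := by positivity
    have hsmall : 1 < (n : ℝ) ^ 10 * (2 * (1 / 2) ^ k) :=
      hsum.trans_lt (mul_lt_mul_of_pos_left (by linarith) hn10)
    have hprod : (2 : ℝ) ^ k * (1 / 2) ^ k = 1 := by rw [← mul_pow]; norm_num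
    have : (n : ℝ) ^ 10 * 2 ≤ 2 ^ k := by
      refine le_trans ?_ hpow
      rw [pow_succ (n : ℝ) 10]
      exact mul_le_mul_of_nonneg_left hn2' hn10.le
    have := mul_le_mul_of_nonneg_right this (by positivity : (0 : ℝ) ≤ (1 / 2) ^ k)
    linarith
  have hfinal := card_div_two_le_nullity e.injective (hrange ▸ hS) D hhalf
  rw [hrange, hD, Fintype.card_fin] at hfinal
  refine le_trans ?_ hfinal
  have : 1 / 40 * (S.card : ℝ) / l = S.card / (20 * l) / 2 := by
    field_simp
    ring
  rw [this]
  linarith
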